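/- arXiv:2205.00881 — 3 statements merged into one kernel-verified Lean document; each statement's English description precedes it below -/
import Mathlib

section
/- Majority dynamics does not preserve MajUD-consensus existence: there exist a profile P (over at least 3 alternatives) that has a MajUD-consensus alternative, and an update order σ, such that MD_σ(P) has no MajUD-consensus alternative. -/
attribute [local instance] Classical.propDecidable

noncomputable section

/-- A preference over the set of alternatives `A`: a binary relation. -/
abbrev Pref (A : Type) := A → A → Prop

/-- A preference is a strict partial order: irreflexive and transitive. -/
def IsPref {A : Type} (pref : Pref A) : Prop :=
  Irreflexive pref ∧ Transitive pref

variable {A : Type} [Fintype A] [DecidableEq A]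

/-- The support `n_P(ab)`: the number of agents preferring `a` to `b` in profile `P`. -/
def support {n : ℕ} (P : Fin n → Pref A) (a b : A) : ℕ :=
  (Finset.univ.filter fun i => P i a b).card

/-- An update order: a list of ordered pairs of distinct alternatives containing,
for each unordered pair `{a, b}` of distinct alternatives, exactly one of `ab` or `ba`,
each exactly once. -/
def IsUpdateOrder (σ : List (A × A)) : Prop :=
  (∀ p ∈ σ, p.1 ≠ p.2) ∧
  (∀ a b : A, a ≠ b → σ.count (a, b) + σ.count (b, a) = 1)

/-- One step of majority dynamics, discussing the pair `p`: agents already ranking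
`p.1` versus `p.2` keep their preference; every other agent adds `p.1 ≻ p.2` if
`n_P(p.1 p.2) ≥ n_P(p.2 p.1)` (ties broken in favour of the first alternative of the
pair), and otherwise adds `p.2 ≻ p.1`, then takes the transitive closure. -/
def mdStep {n : ℕ} (P : Fin n → Pref A) (p : A × A) : Fin n → Pref A :=
  fun i =>
    if P i p.1 p.2 ∨ P i p.2 p.1 then P i
    else if support P p.2 p.1 ≤ support P p.1 p.2 then
      Relation.TransGen (fun x y => P i x y ∨ (x = p.1 ∧ y = p.2))
    else
      Relation.TransGen (fun x y => P i x y ∨ (x = p.2 ∧ y = p.1))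

/-- Majority dynamics `MD_σ(P)`: process the pairs of the update order `σ` in order. -/
def MD {n : ℕ} (σ : List (A × A)) (P : Fin n → Pref A) : Fin n → Pref A :=
  σ.foldl mdStep P

/-- `a` is a Condorcet winner in `P`. -/
def CondorcetWinner {n : ℕ} (P : Fin n → Pref A) (a : A) : Prop :=
  ∀ b, b ≠ a → support P b a < support P a b

/-- `a` is a Condorcet loser in `P`. -/
def CondorcetLoser {n : ℕ} (P : Fin n → Pref A) (a : A) : Prop :=
  ∀ b, b ≠ a → support P a b < support P b a

/-- `a` is undominated in a preference. -/
def Undominated {A : Type} (pref : Pref A) (a : A) : Prop := ∀ b, ¬ pref b a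

/-- `a` is dominant in a preference. -/
def Dominant {A : Type} (pref : Pref A) (a : A) : Prop := ∀ b, b ≠ a → pref a b

/-- `a` is dominated (by every other alternative) in a preference. -/
def DominatedIn {A : Type} (pref : Pref A) (a : A) : Prop := ∀ b, b ≠ a → pref b a

/-- Number of preferences of `P` in which `a` is undominated. -/
def udCount {n : ℕ} (P : Fin n → Pref A) (a : A) : ℕ :=
  (Finset.univ.filter fun i => Undominated (P i) a).card

/-- Number of preferences of `P` in which `a` is dominant. -/
def domCount {n : ℕ} (P : Fin n → Pref A) (a : A) : ℕ :=
  (Finset.univ.filter fun i => Dominant (P i) a).card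

/-- Number of preferences of `P` in which `a` is dominated. -/
def domdCount {n : ℕ} (P : Fin n → Pref A) (a : A) : ℕ :=
  (Finset.univ.filter fun i => DominatedIn (P i) a).card

/-- `a` is undominated in at least one preference and no alternative is undominated
in strictly more preferences than `a`. -/
def PlurUDTop {n : ℕ} (P : Fin n → Pref A) (a : A) : Prop :=
  0 < udCount P a ∧ ∀ b, udCount P b ≤ udCount P a

/-- `a` is the PlurUD-consensus alternative of `P`. -/
def PlurUDConsensus {n : ℕ} (P : Fin n → Pref A) (a : A) : Prop :=
  PlurUDTop P a ∧ ∀ b, PlurUDTop P b → b = a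

/-- `a` is dominant in at least one preference and no alternative is dominant
in strictly more preferences than `a`. -/
def PlurDomTop {n : ℕ} (P : Fin n → Pref A) (a : A) : Prop :=
  0 < domCount P a ∧ ∀ b, domCount P b ≤ domCount P a

/-- `a` is the PlurDom-consensus alternative of `P`. -/
def PlurDomConsensus {n : ℕ} (P : Fin n → Pref A) (a : A) : Prop :=
  PlurDomTop P a ∧ ∀ b, PlurDomTop P b → b = a

/-- `a` is dominated in at least one preference and no alternative is dominated
in strictly more preferences than `a`. -/
def PlurDomdTop {n : ℕ} (P : Fin n → Pref A) (a : A) : Prop :=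
  0 < domdCount P a ∧ ∀ b, domdCount P b ≤ domdCount P a

/-- `a` is the (unique) plurality dominated alternative of `P`. -/
def PlurDomdConsensus {n : ℕ} (P : Fin n → Pref A) (a : A) : Prop :=
  PlurDomdTop P a ∧ ∀ b, PlurDomdTop P b → b = a

/-- `a` is the MajUD-consensus alternative of `P`: undominated in strictly more than
`n / 2` of the preferences, and the unique alternative with this property. -/
def MajUDConsensus {n : ℕ} (P : Fin n → Pref A) (a : A) : Prop :=
  (n < 2 * udCount P a) ∧ ∀ b, n < 2 * udCount P b → b = a

/-- `a` is the MajDom-consensus alternative of `P`: dominant in strictly more than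
`n / 2` of the preferences (such an alternative is automatically unique). -/
def MajDomConsensus {n : ℕ} (P : Fin n → Pref A) (a : A) : Prop :=
  n < 2 * domCount P a

/-- `a` is the UnanUD-consensus alternative of `P`: undominated in every preference,
and the unique alternative with this property. -/
def UnanUDConsensus {n : ℕ} (P : Fin n → Pref A) (a : A) : Prop :=
  (∀ i, Undominated (P i) a) ∧ ∀ b, (∀ i, Undominated (P i) b) → b = a

/-- `a` is the UnanDom-consensus alternative of `P`: dominant in every preference. -/
def UnanDomConsensus {n : ℕ} (P : Fin n → Pref A) (a : A) : Prop :=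
  ∀ i, Dominant (P i) a

/-- A preference is a strict weak ordering: there is an ordered partition of the
alternatives into levels (given by a level function `f`) such that alternatives in the
same level are incomparable, and `a ≻ b` exactly when `a` is in an earlier level. -/
def IsSWO (pref : Pref A) : Prop :=
  ∃ (k : ℕ) (f : A → Fin k), ∀ a b : A, pref a b ↔ f a < f b

theorem mdStep_mono_aux {n m : ℕ} (P : Fin n → Pref (Fin m)) (p : Fin m × Fin m) (i : Fin n)
    (x y : Fin m) (h : P i x y) : mdStep P p i x y := by
  unfold mdStep
  split_ifs
  · exact h
  · exact Relation.TransGen.single (Or.inl h)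
  · exact Relation.TransGen.single (Or.inl h)

theorem MD_mono_aux {n m : ℕ} (σ : List (Fin m × Fin m)) (P : Fin n → Pref (Fin m)) (i : Fin n)
    (x y : Fin m) (h : P i x y) : MD σ P i x y := by
  induction σ generalizing P with
  | nil => exact h
  | cons p σ ih => exact ih (mdStep P p) (mdStep_mono_aux P p i x y h)

theorem udCount_aux {m : ℕ} (P : Fin 2 → Pref (Fin m)) (a : Fin m) :
    2 < 2 * udCount P a ↔ ∀ i, Undominated (P i) a := by
  have hle : udCount P a ≤ 2 := by
    unfold udCount
    exact (Finset.card_le_univ _).trans (by simp)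
  constructor
  · intro h i
    have h2 : udCount P a = 2 := by omega
    unfold udCount at h2
    have h3 := (Finset.card_eq_iff_eq_univ _).1 (h2.trans (by simp : 2 = Fintype.card (Fin 2)))
    have h4 := Finset.mem_univ i
    rw [← h3] at h4
    exact (Finset.mem_filter.1 h4).2
  · intro h
    have : udCount P a = 2 := by
      unfold udCount
      rw [Finset.filter_true_of_mem (fun i _ => h i)]
      simp
    omega

/-- Agent 0 has only `2 ≻ 1`; agent 1 has only `1 ≻ 2`. -/
def exP : Fin 2 → Pref (Fin 3) := fun i x y =>
  (i = 0 ∧ x = 2 ∧ y = 1) ∨ (i = 1 ∧ x = 1 ∧ y = 2)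

/-- Majority dynamics does not preserve MajUD-consensus existence. -/
theorem stmt_4 :
    ∃ (m n : ℕ) (P : Fin n → Pref (Fin m)) (a : Fin m) (σ : List (Fin m × Fin m)),
      3 ≤ m ∧ (∀ i, IsPref (P i)) ∧ MajUDConsensus P a ∧ IsUpdateOrder σ ∧
      ∀ b, ¬ MajUDConsensus (MD σ P) b := by
  refine ⟨3, 2, exP, 0, [(1, 0), (1, 2), (2, 0)], le_rfl, ?_, ?_, ?_, ?_⟩
  · intro i
    constructor
    · intro x
      unfold exP
      revert i x
      decide
    · intro x y z
      unfold exP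
      revert i x y z
      decide
  · constructor
    · rw [udCount_aux]
      intro i b
      unfold exP
      revert i b
      decide
    · intro b hb
      rw [udCount_aux] at hb
      have h0 := hb 0 2
      have h1 := hb 1 1
      unfold exP at h0 h1
      clear hb
      revert b
      decide
  · constructor
    · intro p hp
      fin_cases hp <;> simp
    · intro a b hab
      fin_cases a <;> fin_cases b <;> simp [List.count_cons] at hab ⊢
  · intro b hb
    replace hb := (udCount_aux _ _).1 hb.1
    have hc : b = 0 ∨ b = 1 ∨ b = 2 := by
      clear hb
      revert b
      decide
    rcases hc with rfl | rfl | rfl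
    · refine hb 0 1 (MD_mono_aux [(1, 2), (2, 0)] (mdStep exP (1, 0)) 0 1 0 ?_)
      have hs : support exP 0 1 ≤ support exP 1 0 := by
        simp [support, exP]
      unfold mdStep
      rw [if_neg (by simp [exP]), if_pos hs]
      exact Relation.TransGen.single (Or.inr ⟨rfl, rfl⟩)
    · exact hb 0 2 (MD_mono_aux _ _ _ _ _ (by simp [exP]))
    · exact hb 1 1 (MD_mono_aux _ _ _ _ _ (by simp [exP]))

end
end

section
/- For every m ≥ 8 there exist a profile P over m alternatives in which some alternative w is the PlurDom-consensus alternative and some alternative ℓ ≠ w is the plurality dominated alternative, and an update order σ, such that ℓ is the PlurDom-consensus alternative of MD_σ(P). -/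
attribute [local instance] Classical.propDecidable

noncomputable section

variable {A : Type} [Fintype A] [DecidableEq A]

theorem aux_mono {n : ℕ} (P : Fin n → Pref A) (p : A × A) (i : Fin n) (a b : A)
    (h : P i a b) : mdStep P p i a b := by
  unfold mdStep
  split_ifs
  · exact h
  · exact Relation.TransGen.single (Or.inl h)
  · exact Relation.TransGen.single (Or.inl h)

theorem aux_step {n : ℕ} (Q : Fin n → Pref A) (z b : A) (hb : b ≠ z) (k : Fin n)
    (hU : ∀ i, i ≠ k → Undominated (Q i) z) (hs : ∃ i, Q i z b) (i : Fin n) (hi : i ≠ k) :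
    mdStep Q (z, b) i z b ∧ Undominated (mdStep Q (z, b) i) z := by
  have h1 : support Q b z ≤ support Q z b := by
    have h2 : support Q b z ≤ 1 := by
      unfold support
      refine (Finset.card_le_card (t := {k}) ?_).trans (by simp)
      intro j hj
      by_contra hjk
      exact hU j (by simpa using hjk) b (by simpa using hj)
    have h3 : 0 < support Q z b := by
      obtain ⟨j, hj⟩ := hs
      exact Finset.card_pos.2 ⟨j, by simpa using hj⟩
    omega
  unfold mdStep
  by_cases h : Q i z b ∨ Q i b z
  · rw [if_pos h]
    exact ⟨h.resolve_right (hU i hi b), hU i hi⟩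
  · rw [if_neg h, if_pos h1]
    refine ⟨Relation.TransGen.single (Or.inr ⟨rfl, rfl⟩), ?_⟩
    intro c hc
    cases hc with
    | single h => exact h.elim (hU i hi _) (fun h => hb h.2.symm)
    | tail _ h => exact h.elim (hU i hi _) (fun h => hb h.2.symm)

theorem aux_und {n : ℕ} (Q : Fin n → Pref A) (z : A) (p : A × A) (hp : p.1 ≠ p.2) (i : Fin n)
    (hD : Dominant (Q i) z) (hU : Undominated (Q i) z) : Undominated (mdStep Q p i) z := by
  unfold mdStep
  by_cases h : Q i p.1 p.2 ∨ Q i p.2 p.1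
  · rw [if_pos h]
    exact hU
  · rw [if_neg h]
    have h1 : p.1 ≠ z := fun e => h (Or.inl (e ▸ hD p.2 (fun e2 => hp (e.trans e2.symm))))
    have h2 : p.2 ≠ z := fun e => h (Or.inr (e ▸ hD p.1 (fun e2 => hp (e2.trans e.symm))))
    split_ifs
    · intro c hc
      cases hc with
      | single h => exact h.elim (hU _) (fun h => h2 h.2.symm)
      | tail _ h => exact h.elim (hU _) (fun h => h2 h.2.symm)
    · intro c hc
      cases hc with
      | single h => exact h.elim (hU _) (fun h => h1 h.2.symm)
      | tail _ h => exact h.elim (hU _) (fun h => h1 h.2.symm)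

theorem aux_fold {n : ℕ} (σ : List (A × A)) (hσ : ∀ p ∈ σ, p.1 ≠ p.2) (z : A) (i : Fin n)
    (Q : Fin n → Pref A) (hD : Dominant (Q i) z) (hU : Undominated (Q i) z) :
    Dominant (MD σ Q i) z ∧ Undominated (MD σ Q i) z := by
  induction σ generalizing Q with
  | nil => exact ⟨hD, hU⟩
  | cons p σ ih =>
    exact ih (fun q hq => hσ q (List.mem_cons_of_mem _ hq)) (mdStep Q p)
      (fun b hb => aux_mono Q p i z b (hD b hb))
      (aux_und Q z p (hσ p List.mem_cons_self) i hD hU)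

/-- The profile: agent `0` has `w` on top and `z` at the bottom; agents `1`, `2` rank `z` above
everything except `x`, respectively `y`. -/
def auxP {A : Type} (z x y w : A) (i : Fin 3) : Pref A := fun a b =>
  (i = 0 ∧ ((a = w ∧ b ≠ w) ∨ (b = z ∧ a ≠ z))) ∨
  (i = 1 ∧ a = z ∧ b ≠ z ∧ b ≠ x) ∨ (i = 2 ∧ a = z ∧ b ≠ z ∧ b ≠ y)

theorem aux_cons {f : A → ℕ} {z : A} (h0 : 0 < f z) (h : ∀ b, b ≠ z → f b < f z) :
    (0 < f z ∧ ∀ b, f b ≤ f z) ∧ ∀ b, (0 < f b ∧ ∀ c, f c ≤ f b) → b = z := by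
  refine ⟨⟨h0, fun b => ?_⟩, fun b hb => ?_⟩
  · by_cases e : b = z
    · rw [e]
    · exact (h b e).le
  · by_contra e
    exact absurd (hb.2 z) (not_le.2 (h b e))

/-- For every `m ≥ 8`, majority dynamics can turn the plurality
dominated alternative into the PlurDom-consensus alternative. -/
theorem stmt_10 (m : ℕ) (hm : 8 ≤ m) :
    ∃ (n : ℕ) (P : Fin n → Pref (Fin m)) (w l : Fin m) (σ : List (Fin m × Fin m)),
      (∀ i, IsPref (P i)) ∧ PlurDomConsensus P w ∧ l ≠ w ∧ PlurDomdConsensus P l ∧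
      IsUpdateOrder σ ∧ PlurDomConsensus (MD σ P) l := by
  obtain ⟨z, hz⟩ : ∃ z : Fin m, z.val = 0 := ⟨⟨0, by omega⟩, rfl⟩
  obtain ⟨x, hx⟩ : ∃ z : Fin m, z.val = 1 := ⟨⟨1, by omega⟩, rfl⟩
  obtain ⟨y, hy⟩ : ∃ z : Fin m, z.val = 2 := ⟨⟨2, by omega⟩, rfl⟩
  obtain ⟨w, hw⟩ : ∃ z : Fin m, z.val = 3 := ⟨⟨3, by omega⟩, rfl⟩
  have hzx : x ≠ z := by intro h; rw [h] at hx; omega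
  have hzy : y ≠ z := by intro h; rw [h] at hy; omega
  have hzw : z ≠ w := by intro h; rw [← h] at hw; omega
  have hxy : x ≠ y := by intro h; rw [h] at hx; omega
  have hxw : x ≠ w := by intro h; rw [h] at hx; omega
  have hyw : y ≠ w := by intro h; rw [h] at hy; omega
  let S : Finset (Fin m × Fin m) :=
    Finset.univ.filter fun p => p.1 < p.2 ∧ p ≠ (z, x) ∧ p ≠ (z, y)
  have hS : ∀ p, p ∈ S.toList ↔ p.1 < p.2 ∧ p ≠ (z, x) ∧ p ≠ (z, y) := by
    intro p; simp [S]
  let P := auxP z x y w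
  have hord : IsUpdateOrder ((z, x) :: (z, y) :: S.toList) := by
    have hmem : ∀ p : Fin m × Fin m, p ∈ ((z, x) :: (z, y) :: S.toList) ↔ p.1 < p.2 := by
      intro p
      rw [List.mem_cons, List.mem_cons, hS]
      constructor
      · rintro (h | h | h)
        · rw [h]; show z < x; rw [Fin.lt_def]; omega
        · rw [h]; show z < y; rw [Fin.lt_def]; omega
        · exact h.1
      · intro h; tauto
    have hnd : ((z, x) :: (z, y) :: S.toList).Nodup := by
      rw [List.nodup_cons, List.nodup_cons, List.mem_cons, hS, hS]
      refine ⟨?_, by tauto, S.nodup_toList⟩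
      rintro (h | h)
      · exact hxy (by simpa using h)
      · tauto
    refine ⟨fun p hp => ((hmem p).1 hp).ne, fun a b hab => ?_⟩
    rw [List.Nodup.count hnd, List.Nodup.count hnd]
    rcases lt_or_gt_of_ne hab with h | h
    · rw [if_pos ((hmem (a, b)).2 h), if_neg (fun h2 => lt_asymm h ((hmem (b, a)).1 h2))]
    · rw [if_neg (fun h2 => lt_asymm h ((hmem (a, b)).1 h2)), if_pos ((hmem (b, a)).2 h)]
  have hU0 : ∀ i : Fin 3, i ≠ 0 → Undominated (P i) z := by
    intro i hi b hb
    rcases hb with h | h | h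
    · exact hi h.1
    · exact h.2.2.1 rfl
    · exact h.2.2.1 rfl
  let P1 := mdStep P (z, x)
  have h1 := aux_step P z x hzx 0 hU0 ⟨2, Or.inr (Or.inr ⟨rfl, rfl, hzx, hxy⟩)⟩
  let P2 := mdStep P1 (z, y)
  have h2 := aux_step P1 z y hzy 0 (fun i hi => (h1 i hi).2)
    ⟨1, aux_mono _ _ _ _ _ (Or.inr (Or.inl ⟨rfl, rfl, hzy, hxy.symm⟩))⟩
  have hD2 : ∀ i : Fin 3, i ≠ 0 → Dominant (P2 i) z := by
    intro i hi b hb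
    by_cases ex : b = x
    · rw [ex]; exact aux_mono _ _ _ _ _ (h1 i hi).1
    by_cases ey : b = y
    · rw [ey]; exact (h2 i hi).1
    refine aux_mono _ _ _ _ _ (aux_mono _ _ _ _ _ ?_)
    have : i = 1 ∨ i = 2 := by revert hi; revert i; decide
    rcases this with h | h
    · exact Or.inr (Or.inl ⟨h, rfl, hb, ex⟩)
    · exact Or.inr (Or.inr ⟨h, rfl, hb, ey⟩)
  have hF : ∀ i : Fin 3, i ≠ 0 → Dominant (MD S.toList P2 i) z ∧ Undominated (MD S.toList P2 i) z :=
    fun i hi => aux_fold S.toList (fun p hp => ((hS p).1 hp).1.ne) z i P2 (hD2 i hi) (h2 i hi).2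
  refine ⟨3, P, w, z, (z, x) :: (z, y) :: S.toList, ?_, ?_, hzw, ?_, hord, ?_⟩
  · intro i
    constructor
    · intro a h
      rcases h with ⟨_, h | h⟩ | h | h
      · exact h.2 h.1
      · exact h.2 h.1
      · exact h.2.2.1 h.2.1
      · exact h.2.2.1 h.2.1
    · intro a b c hab hbc
      simp only [P, auxP] at *
      grind
  · have hw0 : 0 < domCount P w :=
      Finset.card_pos.2 ⟨0, by
        simp only [Finset.mem_filter, Finset.mem_univ, true_and]
        exact fun b hb => Or.inl ⟨rfl, Or.inl ⟨rfl, hb⟩⟩⟩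
    refine aux_cons hw0 (fun b hb => lt_of_le_of_lt (le_of_eq ?_) hw0)
    refine Finset.card_eq_zero.2 (Finset.filter_eq_empty_iff.2 fun i _ h => ?_)
    have ha := h w hb.symm
    have hx' := h x
    have hy' := h y
    simp only [P, auxP] at ha hx' hy'
    grind
  · have hz0 : 0 < domdCount P z :=
      Finset.card_pos.2 ⟨0, by
        simp only [Finset.mem_filter, Finset.mem_univ, true_and]
        exact fun b hb => Or.inl ⟨rfl, Or.inr ⟨rfl, hb⟩⟩⟩
    refine aux_cons hz0 (fun b hb => lt_of_le_of_lt (le_of_eq ?_) hz0)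
    refine Finset.card_eq_zero.2 (Finset.filter_eq_empty_iff.2 fun i _ h => ?_)
    have ha := h w
    have hz' := h z
    have hx' := h x
    have hy' := h y
    simp only [P, auxP] at ha hz' hx' hy'
    grind
  · have hge : 2 ≤ domCount (MD S.toList P2) z := by
      have : ({1, 2} : Finset (Fin 3)).card = 2 := by decide
      rw [← this]
      refine Finset.card_le_card fun i hi => ?_
      simp only [Finset.mem_filter, Finset.mem_univ, true_and]
      refine (hF i ?_).1
      rintro rfl
      simp at hi
    refine aux_cons (f := domCount (MD S.toList P2)) (by omega) (fun b hb => ?_)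
    have : domCount (MD S.toList P2) b ≤ 1 := by
      refine (Finset.card_le_card (t := {0}) ?_).trans (by simp)
      intro i hi
      by_contra hi0
      simp only [Finset.mem_filter, Finset.mem_univ, true_and] at hi
      exact (hF i (by simpa using hi0)).2 b (hi z hb.symm)
    omega

end
end

section
/- Majority dynamics enables positive UnanUD-consensus identity control: for every profile P whose UnanUD-consensus alternative is a, there exists an update order σ such that a is the UnanUD-consensus alternative of MD_σ(P). -/
attribute [local instance] Classical.propDecidable

noncomputable section

variable {A : Type} [Fintype A] [DecidableEq A]

theorem mdStep_mono {n : ℕ} (P : Fin n → Pref A) (p : A × A) (i : Fin n) (x y : A)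
    (h : P i x y) : mdStep P p i x y := by
  unfold mdStep
  split_ifs
  · exact h
  · exact Relation.TransGen.single (Or.inl h)
  · exact Relation.TransGen.single (Or.inl h)

theorem MD_mono {n : ℕ} (σ : List (A × A)) (P : Fin n → Pref A) (i : Fin n) (x y : A)
    (h : P i x y) : MD σ P i x y := by
  induction σ generalizing P with
  | nil => exact h
  | cons p σ ih => exact ih (mdStep P p) (mdStep_mono P p i x y h)

theorem support_zero {n : ℕ} (P : Fin n → Pref A) (a b : A)
    (hu : ∀ i, Undominated (P i) a) : support P b a = 0 := by
  unfold support
  rw [Finset.card_eq_zero, Finset.filter_eq_empty_iff]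
  intro i _ h
  exact hu i b h

theorem transGen_ud (r : Pref A) (a c d : A) (hr : Undominated r a) (hd : d ≠ a) :
    Undominated (Relation.TransGen (fun x y => r x y ∨ (x = c ∧ y = d))) a := by
  intro b hb
  rcases Relation.TransGen.tail'_iff.1 hb with ⟨z, _, h | h⟩
  · exact hr z h
  · exact hd h.2.symm

theorem mdStep_ud {n : ℕ} (P : Fin n → Pref A) (p : A × A) (a : A)
    (hp : p.2 ≠ a) (hu : ∀ i, Undominated (P i) a) (i : Fin n) :
    Undominated (mdStep P p i) a := by
  unfold mdStep
  split_ifs with h1 h2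
  · exact hu i
  · exact transGen_ud _ _ _ _ (hu i) hp
  · refine transGen_ud _ _ _ _ (hu i) ?_
    intro h
    apply h2
    rw [h, support_zero P a p.2 hu]
    exact Nat.zero_le _

theorem mdStep_adds {n : ℕ} (P : Fin n → Pref A) (a b : A)
    (hu : ∀ i, Undominated (P i) a) (i : Fin n) : mdStep P (a, b) i a b := by
  unfold mdStep
  split_ifs with h1 h2
  · exact h1.resolve_right (hu i b)
  · exact Relation.TransGen.single (Or.inr ⟨rfl, rfl⟩)
  · refine absurd ?_ h2
    simp only [support_zero P a b hu]
    exact Nat.zero_le _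

theorem MD_main {n : ℕ} (σ : List (A × A)) (P : Fin n → Pref A) (a : A)
    (hσ : ∀ p ∈ σ, p.2 ≠ a) (hu : ∀ i, Undominated (P i) a) (i : Fin n) :
    Undominated (MD σ P i) a ∧ ∀ b, (a, b) ∈ σ → MD σ P i a b := by
  induction σ generalizing P with
  | nil => exact ⟨hu i, fun b h => by simp at h⟩
  | cons p σ ih =>
    have h := ih (mdStep P p) (fun q hq => hσ q (List.mem_cons_of_mem _ hq))
      (mdStep_ud P p a (hσ p List.mem_cons_self) hu)
    refine ⟨h.1, fun b hb => ?_⟩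
    rcases List.mem_cons.1 hb with hb | hb
    · subst hb
      exact MD_mono σ (mdStep P (a, b)) i a b (mdStep_adds P a b hu i)
    · exact h.2 b hb

theorem exists_order (a : A) : ∃ σ : List (A × A), IsUpdateOrder σ ∧
    (∀ p ∈ σ, p.2 ≠ a) ∧ ∀ b, b ≠ a → (a, b) ∈ σ := by
  let e := Fintype.equivFin A
  let s : Finset (A × A) := Finset.univ.filter
    (fun p => p.1 ≠ p.2 ∧ p.2 ≠ a ∧ (p.1 = a ∨ e p.1 < e p.2))
  have hs : ∀ x y : A, (x, y) ∈ s.toList ↔ x ≠ y ∧ y ≠ a ∧ (x = a ∨ e x < e y) := by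
    intro x y
    simp [s]
  refine ⟨s.toList, ⟨fun p hp => ((hs p.1 p.2).1 hp).1, ?_⟩,
    fun p hp => ((hs p.1 p.2).1 hp).2.1, fun b hb => (hs a b).2 ⟨hb.symm, hb, Or.inl rfl⟩⟩
  intro x y hxy
  have hne : e x ≠ e y := fun h => hxy (e.injective h)
  have hn := s.nodup_toList
  rw [hn.count, hn.count]
  simp only [hs]
  rcases lt_or_gt_of_ne hne with h | h
  · by_cases hy : y = a
    · subst hy; simp [hxy, hxy.symm]
    · simp [hxy, hxy.symm, hy, h, h.le]
  · by_cases hx : x = a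
    · subst hx; simp [hxy, hxy.symm]
    · simp [hxy, hxy.symm, hx, h, h.le]

/-- Majority dynamics enables positive UnanUD-consensus identity control. -/
theorem stmt_16 {n : ℕ} (P : Fin n → Pref A) (hP : ∀ i, IsPref (P i))
    (a : A) (ha : UnanUDConsensus P a) :
    ∃ σ : List (A × A), IsUpdateOrder σ ∧ UnanUDConsensus (MD σ P) a := by
  obtain ⟨σ, h1, h2, h3⟩ := exists_order a
  refine ⟨σ, h1, fun i => (MD_main σ P a h2 ha.1 i).1, fun b hb => ?_⟩
  by_contra hne
  exact hne (ha.2 b fun i => absurd ((MD_main σ P a h2 ha.1 i).2 b (h3 b hne)) (hb i a))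

end
end
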